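/- Let ρ, σ be density matrices with supp(ρ) ⊆ supp(σ) and α > 1. Define Q_α(ρ‖σ) := α ∫₀^∞ γ^{α-1} Tr[σ {ρ > γσ}] dγ. Then Q_α(ρ‖σ) ≤ Tr[(σ^{(1-α)/(2α)} ρ σ^{(1-α)/(2α)})^α], i.e., the layer-cake Rényi quantity is bounded by the sandwiched quasi Rényi divergence. -/

import Mathlib

open MeasureTheory Matrix
open scoped ComplexOrder
noncomputable section

/-- The positive part `(X)₊` of a Hermitian matrix, via continuous functional calculus. -/
def mposPart {n : ℕ} (X : Matrix (Fin n) (Fin n) ℂ) : Matrix (Fin n) (Fin n) ℂ :=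
  cfc (fun x : ℝ => max x 0) X

/-- The spectral projection of a Hermitian matrix onto its strictly positive part,
so that `projPos (A - γ • B)` is the projection `{A > γB}`. -/
def projPos {n : ℕ} (X : Matrix (Fin n) (Fin n) ℂ) : Matrix (Fin n) (Fin n) ℂ :=
  cfc (fun x : ℝ => if 0 < x then (1:ℝ) else 0) X

/-- The spectral projection of a Hermitian matrix onto its nonnegative part,
so that `projNonneg (γ • B - A)` is the projection `{A ≤ γB}`. -/
def projNonneg {n : ℕ} (X : Matrix (Fin n) (Fin n) ℂ) : Matrix (Fin n) (Fin n) ℂ :=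
  cfc (fun x : ℝ => if 0 ≤ x then (1:ℝ) else 0) X

/-- Matrix logarithm via functional calculus. -/
def mlog {n : ℕ} (X : Matrix (Fin n) (Fin n) ℂ) : Matrix (Fin n) (Fin n) ℂ :=
  cfc Real.log X

/-- Real matrix power via functional calculus (`Real.rpow`, so negative powers of
positive semidefinite matrices are taken on the support). -/
def mpow {n : ℕ} (X : Matrix (Fin n) (Fin n) ℂ) (a : ℝ) : Matrix (Fin n) (Fin n) ℂ :=
  cfc (fun x : ℝ => x ^ a) X

/-!
Put `φ γ = Tr (ρ - γσ)₊`. By the Neyman–Pearson inequality `-Tr[σ{ρ > γσ}]` is a subgradient of the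
convex function `φ` at `γ`, so integrating by parts bounds the left-hand side by
`α (α - 1) ∫ γ^(α-2) φ γ dγ`. By the layer-cake formula `φ γ` is `γ` times the integral over `t > 0`
of the number of positive eigenvalues of `ρ - γ(σ + t)`. By Sylvester's law of inertia this is the
number of eigenvalues of `(σ + t)^(-1/2) ρ (σ + t)^(-1/2)` above `γ`, so the integral over `γ`
produces the trace of the `α`-th power of that matrix. With `X` the sandwiched operator on the
right-hand side, the Araki–Lieb–Thirring inequality bounds this trace by
`Tr[σ^(α-1) (σ + t)^(-α) X^α]`, whose integral over `t` is `Tr X^α / (α - 1)`.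
-/

section LoewnerTrace

open scoped MatrixOrder

variable {ι 𝕜 : Type*} [Fintype ι] [RCLike 𝕜]

lemma trace_mul_nonneg {A B : Matrix ι ι 𝕜} (hA : 0 ≤ A) (hB : 0 ≤ B) :
    0 ≤ (A * B).trace := by
  classical
  obtain ⟨C, rfl⟩ := CStarAlgebra.nonneg_iff_eq_star_mul_self.mp hB
  rw [← mul_assoc, Matrix.trace_mul_comm, ← mul_assoc]
  exact ((Matrix.nonneg_iff_posSemidef.mp hA).mul_mul_conjTranspose_same C).trace_nonneg

lemma trace_mul_le_trace_mul_right {A B P : Matrix ι ι 𝕜} (hAB : A ≤ B) (hP : 0 ≤ P) :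
    (A * P).trace ≤ (B * P).trace := by
  simpa only [sub_mul, trace_sub, sub_nonneg] using trace_mul_nonneg (sub_nonneg.mpr hAB) hP

end LoewnerTrace

section PositivePart

open scoped MatrixOrder

variable {n : ℕ} {M P : Matrix (Fin n) (Fin n) ℂ}

lemma projPos_nonneg (M : Matrix (Fin n) (Fin n) ℂ) : 0 ≤ projPos M :=
  cfc_nonneg fun x _ => by positivity

lemma projPos_le_one (M : Matrix (Fin n) (Fin n) ℂ) : projPos M ≤ 1 :=
  cfc_le_one _ _ fun x _ => by split_ifs <;> norm_num

lemma mposPart_nonneg (M : Matrix (Fin n) (Fin n) ℂ) : 0 ≤ mposPart M :=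
  cfc_nonneg fun x _ => le_max_right x 0

lemma le_mposPart (hM : M.IsHermitian) : M ≤ mposPart M := by
  conv_lhs => rw [← cfc_id ℝ M hM.isSelfAdjoint]
  exact cfc_mono fun x _ => le_max_left x 0

lemma mul_projPos (hM : M.IsHermitian) : M * projPos M = mposPart M := by
  have hcont (f : ℝ → ℝ) : ContinuousOn f (spectrum ℝ M) := M.finite_real_spectrum.continuousOn f
  calc M * projPos M = cfc (id : ℝ → ℝ) M * projPos M := by rw [cfc_id ℝ M hM.isSelfAdjoint]
    _ = cfc (fun x : ℝ => id x * if 0 < x then 1 else 0) M :=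
        (cfc_mul _ _ M (hcont _) (hcont _)).symm
    _ = mposPart M := by
        unfold mposPart
        congr with x
        rcases le_or_gt x 0 with hx | hx
        · simp [hx, hx.not_gt]
        · simp [hx, hx.le]

lemma trace_mul_le_trace_mposPart (hM : M.IsHermitian) (hP : 0 ≤ P) (hP1 : P ≤ 1) :
    (M * P).trace ≤ (mposPart M).trace :=
  calc (M * P).trace ≤ (mposPart M * P).trace :=
        trace_mul_le_trace_mul_right (le_mposPart hM) hP
    _ = (P * mposPart M).trace := trace_mul_comm _ _
    _ ≤ (1 * mposPart M).trace := trace_mul_le_trace_mul_right hP1 (mposPart_nonneg M)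
    _ = (mposPart M).trace := by rw [one_mul]

lemma trace_mposPart_sub_smul_add_le {ρ σ : Matrix (Fin n) (Fin n) ℂ} (hρ : ρ.IsHermitian)
    (hσ : σ.IsHermitian) (x γ : ℝ) :
    (mposPart (ρ - γ • σ)).trace.re + (γ - x) * (σ * projPos (ρ - γ • σ)).trace.re
      ≤ (mposPart (ρ - x • σ)).trace.re := by
  have hherm (y : ℝ) : (ρ - y • σ).IsHermitian := hρ.sub (hσ.smul (.all y))
  set P := projPos (ρ - γ • σ) with hP
  have hsplit : (ρ - x • σ) * P = mposPart (ρ - γ • σ) + (γ - x) • (σ * P) := by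
    rw [← mul_projPos (hherm γ), ← hP]
    simp only [sub_mul, smul_mul_assoc]
    module
  have hle := trace_mul_le_trace_mposPart (hherm x) (projPos_nonneg (ρ - γ • σ))
    (projPos_le_one _)
  rw [← hP, hsplit, trace_add, trace_smul] at hle
  simpa using (Complex.le_def.mp hle).1

end PositivePart

section Scaling

open Set Filter Topology

open scoped ENNReal

lemma lintegral_Ioi_comp_mul_left (f : ℝ → ℝ≥0∞) {a : ℝ} (ha : 0 < a) :
    ∫⁻ x in Ioi 0, f (a * x) = ENNReal.ofReal a⁻¹ * ∫⁻ x in Ioi 0, f x := by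
  have hemb : MeasurableEmbedding (a * ·) := measurableEmbedding_mulLeft₀ ha.ne'
  have hpre : (a * ·) ⁻¹' Ioi (0 : ℝ) = Ioi 0 := by rw [preimage_const_mul_Ioi₀ _ ha, zero_div]
  conv_lhs => rw [← hpre, ← hemb.lintegral_map, ← hemb.restrict_map,
    Real.map_volume_mul_left ha.ne', Measure.restrict_smul, lintegral_smul_measure,
    abs_of_pos (inv_pos.mpr ha), smul_eq_mul]

lemma tendsto_rpow_neg_sub_one_div_one_sub (p : ℝ) :
    Tendsto (fun a : ℝ => (a ^ (-p) - 1) / (1 - a)) (𝓝[<] 1) (𝓝 p) := by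
  have hderiv : HasDerivAt (fun a : ℝ => a ^ (-p)) (-p) 1 := by
    simpa using Real.hasDerivAt_rpow_const (x := 1) (p := -p) (.inl one_ne_zero)
  have hslope := (hasDerivAt_iff_tendsto_slope_left_right.mp hderiv).1.neg
  rw [neg_neg] at hslope
  refine hslope.congr fun a => ?_
  rw [slope_def_field, Real.one_rpow, ← div_neg, neg_sub]

section Subgradient

variable {φ t : ℝ → ℝ}

lemma antitone_of_subgradient (ht : ∀ x, 0 ≤ t x)
    (hsub : ∀ x γ, φ γ + (γ - x) * t γ ≤ φ x) : Antitone φ := fun x γ hxγ => by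
  nlinarith [hsub x γ, mul_nonneg (sub_nonneg.mpr hxγ) (ht γ)]

lemma subgradient_antitone (hsub : ∀ x γ, φ γ + (γ - x) * t γ ≤ φ x) : Antitone t := by
  intro x γ hxγ
  rcases hxγ.eq_or_lt with rfl | hlt
  · rfl
  · refine le_of_mul_le_mul_left ?_ (sub_pos.mpr hlt)
    linarith [hsub x γ, hsub γ x]

lemma rpow_mul_add_le_of_subgradient (hsub : ∀ x γ, φ γ + (γ - x) * t γ ≤ φ x) (p : ℝ)
    {a γ : ℝ} (ha : 0 < a) (hγ : 0 < γ) :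
    γ ^ (p - 1) * φ γ + (1 - a) * (γ ^ p * t γ)
      ≤ a ^ (1 - p) * ((a * γ) ^ (p - 1) * φ (a * γ)) := by
  have hγp : γ ^ p = γ ^ (p - 1) * γ := by rw [← Real.rpow_add_one hγ.ne', sub_add_cancel]
  calc γ ^ (p - 1) * φ γ + (1 - a) * (γ ^ p * t γ)
      = γ ^ (p - 1) * (φ γ + (γ - a * γ) * t γ) := by rw [hγp]; ring
    _ ≤ γ ^ (p - 1) * φ (a * γ) := by gcongr; exact hsub _ _
    _ = a ^ (1 - p) * ((a * γ) ^ (p - 1) * φ (a * γ)) := by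
        rw [Real.mul_rpow ha.le hγ.le, ← neg_sub p 1, Real.rpow_neg ha.le]
        field_simp [(Real.rpow_pos_of_pos ha (p - 1)).ne']

lemma lintegral_add_one_sub_mul_le_of_subgradient (hφ : ∀ x, 0 ≤ φ x) (ht : ∀ x, 0 ≤ t x)
    (hsub : ∀ x γ, φ γ + (γ - x) * t γ ≤ φ x) (p : ℝ) {a : ℝ} (ha : a ∈ Ioo 0 1) :
    (∫⁻ γ in Ioi 0, ENNReal.ofReal (γ ^ (p - 1) * φ γ))
        + ENNReal.ofReal (1 - a) * ∫⁻ γ in Ioi 0, ENNReal.ofReal (γ ^ p * t γ)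
      ≤ ENNReal.ofReal (a ^ (-p)) * ∫⁻ γ in Ioi 0, ENNReal.ofReal (γ ^ (p - 1) * φ γ) := by
  set F : ℝ → ℝ≥0∞ := fun γ => ENNReal.ofReal (γ ^ (p - 1) * φ γ)
  have ha0 : 0 < a := ha.1
  have ha1 : 0 < 1 - a := sub_pos.mpr ha.2
  have hF : Measurable F := by
    have := (antitone_of_subgradient ht hsub).measurable
    fun_prop
  calc (∫⁻ γ in Ioi 0, F γ) + ENNReal.ofReal (1 - a) * ∫⁻ γ in Ioi 0, ENNReal.ofReal (γ ^ p * t γ)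
      = ∫⁻ γ in Ioi 0, (F γ + ENNReal.ofReal (1 - a) * ENNReal.ofReal (γ ^ p * t γ)) := by
        rw [lintegral_add_left hF, lintegral_const_mul' _ _ ENNReal.ofReal_ne_top]
    _ ≤ ∫⁻ γ in Ioi 0, ENNReal.ofReal (a ^ (1 - p)) * F (a * γ) := by
        refine setLIntegral_mono' measurableSet_Ioi fun γ (hγ : 0 < γ) => ?_
        have := hφ γ
        have := ht γ
        rw [← ENNReal.ofReal_mul ha1.le, ← ENNReal.ofReal_mul (by positivity),
          ← ENNReal.ofReal_add (by positivity) (by positivity)]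
        exact ENNReal.ofReal_le_ofReal (rpow_mul_add_le_of_subgradient hsub p ha0 hγ)
    _ = ENNReal.ofReal (a ^ (1 - p)) * (ENNReal.ofReal a⁻¹ * ∫⁻ γ in Ioi 0, F γ) := by
        rw [lintegral_const_mul' _ _ ENNReal.ofReal_ne_top, lintegral_Ioi_comp_mul_left F ha0]
    _ = ENNReal.ofReal (a ^ (-p)) * ∫⁻ γ in Ioi 0, F γ := by
        rw [← mul_assoc, ← ENNReal.ofReal_mul (by positivity), ← div_eq_mul_inv,
          ← Real.rpow_sub_one ha0.ne', sub_sub_cancel_left]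

-- An integration by parts without differentiating `φ`: compare `φ γ` with `φ (a * γ)` and let
-- `a ↑ 1`.
lemma lintegral_rpow_mul_subgradient_le (hφ : ∀ x, 0 ≤ φ x) (ht : ∀ x, 0 ≤ t x)
    (hsub : ∀ x γ, φ γ + (γ - x) * t γ ≤ φ x) {p : ℝ} (hp : 0 < p) :
    ∫⁻ γ in Ioi 0, ENNReal.ofReal (γ ^ p * t γ)
      ≤ ENNReal.ofReal p * ∫⁻ γ in Ioi 0, ENNReal.ofReal (γ ^ (p - 1) * φ γ) := by
  set Φ := ∫⁻ γ in Ioi 0, ENNReal.ofReal (γ ^ (p - 1) * φ γ)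
  rcases eq_or_ne Φ ⊤ with htop | hfin
  · simp [htop, hp]
  have hp0 : ENNReal.ofReal p ≠ 0 := (ENNReal.ofReal_pos.mpr hp).ne'
  refine ge_of_tendsto (ENNReal.Tendsto.mul_const (ENNReal.tendsto_ofReal
    (tendsto_rpow_neg_sub_one_div_one_sub p)) (.inl hp0)) ?_
  filter_upwards [Ioo_mem_nhdsLT zero_lt_one] with a ha
  have ha1 : 0 < 1 - a := sub_pos.mpr ha.2
  have ha1' : ENNReal.ofReal (1 - a) ≠ 0 := (ENNReal.ofReal_pos.mpr ha1).ne'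
  rw [ENNReal.ofReal_div_of_pos ha1, ← ENNReal.mul_div_right_comm,
    ENNReal.le_div_iff_mul_le (.inl ha1') (.inl ENNReal.ofReal_ne_top),
    ENNReal.ofReal_sub _ zero_le_one, ENNReal.ofReal_one, ENNReal.sub_mul fun _ _ => hfin,
    one_mul, mul_comm]
  exact ENNReal.le_sub_of_add_le_left hfin
    (lintegral_add_one_sub_mul_le_of_subgradient hφ ht hsub p ha)

end Subgradient

end Scaling

section PosIndex

open Module

variable {ι κ 𝕜 : Type*} [Fintype ι] [Fintype κ] [RCLike 𝕜]

/-- The Hermitian form of `X` is positive definite on the subspace `W`; non-Hermitian `X` are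
allowed, through the real part of the form. -/
def IsPosDefOn (X : Matrix ι ι 𝕜) (W : Submodule 𝕜 (ι → 𝕜)) : Prop :=
  ∀ v ∈ W, v ≠ 0 → 0 < RCLike.re (star v ⬝ᵥ X *ᵥ v)

/-- The positive index of inertia: the largest dimension of a subspace on which the form of `X`
is positive definite. -/
def posIndex (X : Matrix ι ι 𝕜) : ℕ :=
  sSup {d | ∃ W : Submodule 𝕜 (ι → 𝕜), IsPosDefOn X W ∧ finrank 𝕜 W = d}

lemma isGreatest_posIndex (X : Matrix ι ι 𝕜) :
    IsGreatest {d | ∃ W : Submodule 𝕜 (ι → 𝕜), IsPosDefOn X W ∧ finrank 𝕜 W = d}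
      (posIndex X) := by
  have hbdd : BddAbove {d | ∃ W : Submodule 𝕜 (ι → 𝕜), IsPosDefOn X W ∧ finrank 𝕜 W = d} := by
    refine ⟨finrank 𝕜 (ι → 𝕜), ?_⟩
    rintro _ ⟨W, -, rfl⟩
    exact W.finrank_le
  have hbot : IsPosDefOn X ⊥ := fun v hv hv0 => absurd ((Submodule.mem_bot 𝕜).mp hv) hv0
  exact ⟨Nat.sSup_mem ⟨_, ⊥, hbot, rfl⟩ hbdd, fun _ hd => le_csSup hbdd hd⟩

lemma exists_isPosDefOn_finrank_eq_posIndex (X : Matrix ι ι 𝕜) :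
    ∃ W : Submodule 𝕜 (ι → 𝕜), IsPosDefOn X W ∧ finrank 𝕜 W = posIndex X :=
  (isGreatest_posIndex X).1

lemma IsPosDefOn.finrank_le_posIndex {X : Matrix ι ι 𝕜} {W : Submodule 𝕜 (ι → 𝕜)}
    (hW : IsPosDefOn X W) : finrank 𝕜 W ≤ posIndex X :=
  (isGreatest_posIndex X).2 ⟨W, hW, rfl⟩

lemma posIndex_le_of_pos_imp_pos {X : Matrix ι ι 𝕜} {Y : Matrix κ κ 𝕜} (K : Matrix κ ι 𝕜)
    (hXY : ∀ v, 0 < RCLike.re (star v ⬝ᵥ X *ᵥ v) →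
      0 < RCLike.re (star (K *ᵥ v) ⬝ᵥ Y *ᵥ (K *ᵥ v))) :
    posIndex X ≤ posIndex Y := by
  obtain ⟨W, hW, hdim⟩ := exists_isPosDefOn_finrank_eq_posIndex X
  have hdisj : Disjoint W (LinearMap.ker K.mulVecLin) := by
    rw [Submodule.disjoint_def]
    intro v hv hKv
    by_contra hv0
    have hpos := hXY v (hW v hv hv0)
    rw [LinearMap.mem_ker, mulVecLin_apply] at hKv
    simp [hKv] at hpos
  have hmap : IsPosDefOn Y (W.map K.mulVecLin) := by
    rintro _ ⟨v, hv, rfl⟩ hKv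
    exact hXY v (hW v hv fun hv0 => hKv (by rw [hv0, map_zero]))
  have hinj : Function.Injective (K.mulVecLin.domRestrict W) := by
    rwa [LinearMap.injective_domRestrict_iff]
  calc posIndex X = finrank 𝕜 W := hdim.symm
    _ = finrank 𝕜 (W.map K.mulVecLin) := by
        rw [← LinearMap.range_domRestrict, LinearMap.finrank_range_of_inj hinj]
    _ ≤ posIndex Y := hmap.finrank_le_posIndex

lemma posIndex_conjTranspose_mul_mul_le (K : Matrix κ ι 𝕜) (X : Matrix κ κ 𝕜) :
    posIndex (Kᴴ * X * K) ≤ posIndex X :=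
  posIndex_le_of_pos_imp_pos K fun v hv => by
    rwa [← mulVec_mulVec, ← mulVec_mulVec, dotProduct_mulVec, ← star_mulVec] at hv

lemma IsPosDefOn.eventually {X : Matrix ι ι 𝕜} {W : Submodule 𝕜 (ι → 𝕜)} (hW : IsPosDefOn X W) :
    ∀ᶠ Y in nhds X, IsPosDefOn Y W := by
  set K : Set (ι → 𝕜) := Metric.sphere 0 1 ∩ W
  have hK : IsCompact K := (isCompact_sphere 0 1).inter_right W.closed_of_finiteDimensional
  have hcont : Continuous fun z : Matrix ι ι 𝕜 × (ι → 𝕜) =>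
      RCLike.re (star z.2 ⬝ᵥ z.1 *ᵥ z.2) :=
    RCLike.continuous_re.comp
      (continuous_snd.star.dotProduct (continuous_fst.matrix_mulVec continuous_snd))
  have hsphere : ∀ᶠ Y in nhds X, ∀ v ∈ K, 0 < RCLike.re (star v ⬝ᵥ Y *ᵥ v) := by
    refine hK.eventually_forall_of_forall_eventually fun v hv => ?_
    have hv0 : v ≠ 0 := ne_zero_of_mem_unit_sphere ⟨v, hv.1⟩
    exact hcont.continuousAt.eventually (lt_mem_nhds (hW v hv.2 hv0))
  filter_upwards [hsphere] with Y hY v hv hv0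
  have hnorm : 0 < ‖v‖ := norm_pos_iff.mpr hv0
  have hmem : ‖v‖⁻¹ • v ∈ K := by
    refine ⟨by simp [norm_smul, hnorm.ne'], W.smul_of_tower_mem _ hv⟩
  have hpos := hY _ hmem
  rw [star_smul, mulVec_smul, dotProduct_smul, smul_dotProduct, star_trivial, RCLike.smul_re,
    RCLike.smul_re] at hpos
  exact pos_of_mul_pos_right (pos_of_mul_pos_right hpos (by positivity)) (by positivity)

lemma lowerSemicontinuous_posIndex :
    LowerSemicontinuous (posIndex : Matrix ι ι 𝕜 → ℕ) := by
  intro X d hd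
  obtain ⟨W, hW, hdim⟩ := exists_isPosDefOn_finrank_eq_posIndex X
  filter_upwards [hW.eventually] with Y hY
  exact hd.trans_le (hdim ▸ hY.finrank_le_posIndex)

variable [DecidableEq ι]

lemma re_star_dotProduct_diagonal_mulVec (l : ι → ℝ) (v : ι → 𝕜) :
    RCLike.re (star v ⬝ᵥ diagonal (fun i => (l i : 𝕜)) *ᵥ v) = ∑ i, l i * ‖v i‖ ^ 2 := by
  simp only [dotProduct, mulVec_diagonal, Pi.star_apply, RCLike.star_def, map_sum]
  refine Finset.sum_congr rfl fun i _ => ?_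
  rw [mul_left_comm, RCLike.conj_mul]
  norm_cast

lemma isPosDefOn_diagonal_spanSubset (l : ι → ℝ) :
    IsPosDefOn (diagonal fun i => (l i : 𝕜)) (Pi.spanSubset 𝕜 {i | 0 < l i}) := by
  intro v hv hv0
  rw [Pi.mem_spanSubset_iff] at hv
  obtain ⟨i, hi⟩ := Function.ne_iff.mp hv0
  have hli (j : ι) (hj : v j ≠ 0) : 0 < l j := by
    by_contra hlj
    exact hj (hv j hlj)
  rw [re_star_dotProduct_diagonal_mulVec]
  refine Finset.sum_pos' (fun j _ => ?_) ⟨i, Finset.mem_univ i, ?_⟩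
  · rcases eq_or_ne (v j) 0 with hj | hj
    · simp [hj]
    · have := hli j hj
      positivity
  · have := hli i hi
    have : 0 < ‖v i‖ := norm_pos_iff.mpr hi
    positivity

lemma IsPosDefOn.disjoint_spanSubset_compl {l : ι → ℝ} {W : Submodule 𝕜 (ι → 𝕜)}
    (hW : IsPosDefOn (diagonal fun i => (l i : 𝕜)) W) :
    Disjoint W (Pi.spanSubset 𝕜 {i | 0 < l i}ᶜ) := by
  rw [Submodule.disjoint_def]
  intro v hv hvS
  rw [Pi.mem_spanSubset_iff] at hvS
  by_contra hv0
  refine (hW v hv hv0).not_ge ?_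
  rw [re_star_dotProduct_diagonal_mulVec]
  refine Finset.sum_nonpos fun i _ => ?_
  rcases le_or_gt (l i) 0 with hi | hi
  · exact mul_nonpos_of_nonpos_of_nonneg hi (by positivity)
  · simp [hvS i fun h => h hi]

lemma posIndex_diagonal (l : ι → ℝ) :
    posIndex (diagonal fun i => (l i : 𝕜)) = {i | 0 < l i}.ncard := by
  obtain ⟨W, hW, hdim⟩ := exists_isPosDefOn_finrank_eq_posIndex (diagonal fun i => (l i : 𝕜))
  have hupper := Submodule.finrank_add_finrank_le_of_disjoint hW.disjoint_spanSubset_compl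
  have hlower := (isPosDefOn_diagonal_spanSubset (𝕜 := 𝕜) l).finrank_le_posIndex
  rw [Pi.dim_spanSubset] at hupper hlower
  rw [finrank_fintype_fun_eq_card, ← Nat.card_eq_fintype_card,
    ← Set.ncard_add_ncard_compl {i | 0 < l i}] at hupper
  lia

lemma posIndex_unitary_conj {U : Matrix ι ι 𝕜} (hU : U ∈ unitaryGroup ι 𝕜) (X : Matrix ι ι 𝕜) :
    posIndex (U * X * Uᴴ) = posIndex X := by
  have hUU : Uᴴ * U = 1 := mem_unitaryGroup_iff'.mp hU
  refine le_antisymm ?_ ?_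
  · simpa only [conjTranspose_conjTranspose] using posIndex_conjTranspose_mul_mul_le Uᴴ X
  · calc posIndex X = posIndex (Uᴴ * (U * X * Uᴴ) * U) := by
          rw [mul_assoc, mul_assoc (U * X), hUU, mul_one, ← mul_assoc, hUU, one_mul]
      _ ≤ posIndex (U * X * Uᴴ) := posIndex_conjTranspose_mul_mul_le U _

lemma cfc_eq_eigenvectorUnitary_conj {M : Matrix ι ι 𝕜} (hM : M.IsHermitian) (f : ℝ → ℝ) :
    cfc f M = hM.eigenvectorUnitary * diagonal (fun i => (f (hM.eigenvalues i) : 𝕜))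
      * (hM.eigenvectorUnitary : Matrix ι ι 𝕜)ᴴ :=
  hM.cfc_eq f

lemma trace_cfc {M : Matrix ι ι 𝕜} (hM : M.IsHermitian) (f : ℝ → ℝ) :
    (cfc f M).trace = ∑ i, (f (hM.eigenvalues i) : 𝕜) := by
  have hUU : (hM.eigenvectorUnitary : Matrix ι ι 𝕜)ᴴ * hM.eigenvectorUnitary = 1 :=
    Unitary.coe_star_mul_self hM.eigenvectorUnitary
  rw [cfc_eq_eigenvectorUnitary_conj hM, trace_mul_comm, ← mul_assoc, hUU, one_mul,
    trace_diagonal]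

lemma posIndex_cfc {M : Matrix ι ι 𝕜} (hM : M.IsHermitian) (f : ℝ → ℝ) :
    posIndex (cfc f M) = {i | 0 < f (hM.eigenvalues i)}.ncard := by
  rw [cfc_eq_eigenvectorUnitary_conj hM, posIndex_unitary_conj hM.eigenvectorUnitary.2,
    posIndex_diagonal]

lemma posIndex_sub_smul_one {M : Matrix ι ι 𝕜} (hM : M.IsHermitian) (t : ℝ) :
    posIndex (M - t • (1 : Matrix ι ι 𝕜)) = {i | t < hM.eigenvalues i}.ncard := by
  have hcfc : M - t • (1 : Matrix ι ι 𝕜) = cfc (fun x : ℝ => x - t) M := by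
    rw [cfc_sub (fun x => x) (fun _ => t) M continuousOn_id continuousOn_const,
      cfc_id' ℝ M hM.isSelfAdjoint, cfc_const t M hM.isSelfAdjoint,
      Algebra.algebraMap_eq_smul_one]
  simp only [hcfc, posIndex_cfc hM, sub_pos]

open Set in
lemma trace_cfc_max_rpow_eq_lintegral_posIndex {M : Matrix ι ι 𝕜} (hM : M.IsHermitian) {p : ℝ}
    (hp : 0 < p) :
    ENNReal.ofReal (RCLike.re (cfc (fun x : ℝ => max x 0 ^ p) M).trace)
      = ENNReal.ofReal p * ∫⁻ t in Ioi 0,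
          (posIndex (M - t • (1 : Matrix ι ι 𝕜)) : ENNReal) * ENNReal.ofReal (t ^ (p - 1)) := by
  let _ : MeasurableSpace ι := ⊤
  set f : ι → ℝ := fun i => max (hM.eigenvalues i) 0
  have hf : 0 ≤ f := fun i => le_max_right _ _
  have hcake := lintegral_rpow_eq_lintegral_meas_lt_mul Measure.count (.of_forall hf)
    Measurable.of_discrete.aemeasurable hp
  have hcount {t : ℝ} (ht : t ∈ Ioi (0 : ℝ)) :
      Measure.count {i | t < f i} = posIndex (M - t • (1 : Matrix ι ι 𝕜)) := by
    have hset : {i | t < f i} = {i | t < hM.eigenvalues i} := by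
      ext i
      simp [f, not_lt_of_gt (mem_Ioi.mp ht)]
    rw [hset, posIndex_sub_smul_one hM, Measure.count_apply_finite _ (toFinite _),
      ncard_eq_toFinset_card _ (toFinite _)]
  rw [← setLIntegral_congr_fun measurableSet_Ioi fun t ht => by rw [← hcount ht], ← hcake,
    lintegral_count, tsum_fintype, trace_cfc hM, ← ENNReal.ofReal_sum_of_nonneg fun i _ =>
      Real.rpow_nonneg (hf i) p]
  simp [f]

end PosIndex

section ArakiLiebThirring

open Complex
open scoped Matrix.Norms.L2Operator MatrixOrder ComplexConjugate

variable {ι : Type*} [Fintype ι] {A B : Matrix ι ι ℂ}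

lemma norm_trace_mul_le (M N : Matrix ι ι ℂ) :
    ‖(M * N).trace‖ ≤ ((M * star M).trace.re + (star N * N).trace.re) / 2 := by
  have hM : (M * star M).trace.re = ∑ i, ∑ j, ‖M i j‖ ^ 2 := by
    simp [trace, mul_apply, mul_conj', ← ofReal_pow]
  have hN : (star N * N).trace.re = ∑ i, ∑ j, ‖N j i‖ ^ 2 := by
    simp [trace, mul_apply, conj_mul', ← ofReal_pow]
  calc ‖(M * N).trace‖ = ‖∑ i, ∑ j, M i j * N j i‖ := by simp [trace, mul_apply]
    _ ≤ ∑ i, ∑ j, ‖M i j‖ * ‖N j i‖ := by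
        refine norm_sum_le_of_le _ fun i _ => norm_sum_le_of_le _ fun j _ => ?_
        rw [norm_mul]
    _ ≤ ∑ i, ∑ j, (‖M i j‖ ^ 2 + ‖N j i‖ ^ 2) / 2 := by
        gcongr with i _ j _
        linarith [two_mul_le_add_sq ‖M i j‖ ‖N j i‖]
    _ = ((M * star M).trace.re + (star N * N).trace.re) / 2 := by
        simp only [hM, hN, ← Finset.sum_div, ← Finset.sum_add_distrib]

lemma posSemidef_mul_mul_self (hA : A.PosSemidef) (hB : B.PosSemidef) :
    (A * B * A).PosSemidef := by
  simpa only [hA.isHermitian.eq] using hB.mul_mul_conjTranspose_same A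

variable [DecidableEq ι]

/-- The power `A ^ z` of a positive semidefinite matrix, taken on the support of `A`: the scalar
function is `0 ^ z = 0` for every `z`, including `z = 0`, which makes it entire in `z`. -/
def supportCpow (A : Matrix ι ι ℂ) (z : ℂ) : Matrix ι ι ℂ :=
  cfc (fun x : ℂ => if x = 0 then 0 else x ^ z) A

lemma supportCpow_add (A : Matrix ι ι ℂ) (z w : ℂ) :
    supportCpow A (z + w) = supportCpow A z * supportCpow A w := by
  have hcont (f : ℂ → ℂ) : ContinuousOn f (spectrum ℂ A) := A.finite_spectrum.continuousOn f
  rw [supportCpow, supportCpow, supportCpow, ← cfc_mul _ _ A (hcont _) (hcont _)]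
  congr with x
  rcases eq_or_ne x 0 with rfl | hx
  · simp
  · simp [hx, cpow_add]

lemma exists_ofReal_eq_of_mem_spectrum (hA : A.PosSemidef) {x : ℂ} (hx : x ∈ spectrum ℂ A) :
    ∃ r : ℝ, 0 ≤ r ∧ (r : ℂ) = x := by
  have hx0 : 0 ≤ x := (posSemidef_iff_isHermitian_and_spectrum_nonneg.mp hA).2 hx
  exact RCLike.nonneg_iff_exists_ofReal.mp hx0

lemma supportCpow_ofReal (hA : A.PosSemidef) {p : ℝ} (hp : 0 < p) :
    supportCpow A p = cfc (fun x : ℝ => x ^ p) A := by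
  rw [cfc_real_eq_complex _ hA.isHermitian.isSelfAdjoint]
  refine cfc_congr fun x hx => ?_
  obtain ⟨r, hr, rfl⟩ := exists_ofReal_eq_of_mem_spectrum hA hx
  rcases eq_or_ne r 0 with rfl | hr0
  · simp [hp.ne']
  · simp [hr0, ofReal_cpow hr]

lemma star_supportCpow (hA : A.PosSemidef) (z : ℂ) :
    star (supportCpow A z) = supportCpow A (conj z) := by
  rw [supportCpow, ← cfc_star]
  refine cfc_congr fun x hx => ?_
  obtain ⟨r, hr, rfl⟩ := exists_ofReal_eq_of_mem_spectrum hA hx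
  rcases eq_or_ne r 0 with rfl | hr0
  · simp
  · simp only [ofReal_eq_zero, hr0, if_false]
    exact (cpow_conj r z (by simp [arg_ofReal_of_nonneg hr, Real.pi_ne_zero.symm])).symm ▸ by simp

lemma star_supportCpow_mul_self (hA : A.PosSemidef) (z : ℂ) :
    star (supportCpow A z) * supportCpow A z = supportCpow A (2 * z.re : ℝ) := by
  rw [star_supportCpow hA, ← supportCpow_add, add_comm, add_conj]

lemma supportCpow_mul_star_self (hA : A.PosSemidef) (z : ℂ) :
    supportCpow A z * star (supportCpow A z) = supportCpow A (2 * z.re : ℝ) := by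
  rw [star_supportCpow hA, ← supportCpow_add, add_conj]

lemma norm_supportCpow_le (hA : A.PosSemidef) {z : ℂ} (hz : 0 ≤ z.re) :
    ‖supportCpow A z‖ ≤ max 1 ‖A‖ ^ z.re := by
  refine norm_cfc_le (by positivity) fun x hx => ?_
  obtain ⟨r, hr, rfl⟩ := exists_ofReal_eq_of_mem_spectrum hA hx
  have hnormal : IsStarNormal A := hA.isHermitian.isSelfAdjoint.isStarNormal
  have hrA : r ≤ ‖A‖ := by
    simpa [abs_of_nonneg hr, cfc_id ℂ A] using norm_apply_le_norm_cfc (id : ℂ → ℂ) A hx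
  split_ifs with h
  · rw [norm_zero]
    positivity
  · rw [norm_cpow_eq_rpow_re_of_pos (hr.lt_of_ne' (ofReal_ne_zero.mp h))]
    gcongr
    exact hrA.trans (le_max_right _ _)

lemma differentiable_supportCpow (A : Matrix ι ι ℂ) :
    Differentiable ℂ fun z => supportCpow A z := by
  have hsum (z : ℂ) : supportCpow A z = ∑ x ∈ A.finite_spectrum.toFinset,
      (if x = 0 then 0 else x ^ z) • cfc (fun y : ℂ => if y = x then 1 else 0) A := by
    have hcont (f : ℂ → ℂ) : ContinuousOn f (spectrum ℂ A) := A.finite_spectrum.continuousOn f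
    simp_rw [← cfc_smul _ _ A (hcont _)]
    rw [← cfc_sum _ A _ fun _ _ => hcont _]
    refine cfc_congr fun y hy => ?_
    simp [Finset.sum_ite_eq, hy]
  simp_rw [hsum]
  refine .fun_sum fun x _ => .smul_const ?_ _
  split_ifs with hx
  · exact differentiable_const 0
  · exact differentiable_id.const_cpow (.inl hx)

lemma norm_trace_mul_mul_le {U : Matrix ι ι ℂ} (hU : ‖U‖ ≤ 1) (M N : Matrix ι ι ℂ) :
    ‖(M * U * N).trace‖ ≤ ((M * star M).trace.re + (star N * N).trace.re) / 2 := by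
  have hUU : star U * U ≤ 1 := by
    rw [← CStarAlgebra.norm_le_one_iff_of_nonneg _ (star_mul_self_nonneg U),
      CStarRing.norm_star_mul_self]
    exact mul_le_one₀ hU (norm_nonneg U) hU
  have hUN : (star (U * N) * (U * N)).trace ≤ (star N * N).trace :=
    calc (star (U * N) * (U * N)).trace = (star U * U * (N * star N)).trace := by
          rw [star_mul, mul_assoc, trace_mul_comm]
          simp only [mul_assoc]
      _ ≤ (1 * (N * star N)).trace :=
          trace_mul_le_trace_mul_right hUU (mul_star_self_nonneg N)
      _ = (star N * N).trace := by rw [one_mul, trace_mul_comm]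
  rw [mul_assoc]
  linarith [norm_trace_mul_le M (U * N), (Complex.le_def.mp hUN).1]

lemma norm_supportCpow_le_one (hA : A.PosSemidef) {z : ℂ} (hz : z.re = 0) :
    ‖supportCpow A z‖ ≤ 1 := by
  simpa only [hz, Real.rpow_zero] using norm_supportCpow_le hA hz.ge

lemma supportCpow_one (hA : A.PosSemidef) : supportCpow A 1 = A := by
  simpa [cfc_id' ℝ A hA.isHermitian.isSelfAdjoint] using supportCpow_ofReal hA one_pos

/-- Hadamard's three lines theorem for this function, between `ζ = 0` and `ζ = 1`, yields the
Araki–Lieb–Thirring inequality; at `ζ = 1 / α` it is the trace of `(A * B * A) ^ α`. -/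
def arakiInterpolant (A B : Matrix ι ι ℂ) (α : ℝ) (ζ : ℂ) : ℂ :=
  (supportCpow (A * B * A) (α - α * ζ)
    * (supportCpow A (α * ζ) * supportCpow B (α * ζ) * supportCpow A (α * ζ))).trace

lemma differentiable_arakiInterpolant (A B : Matrix ι ι ℂ) (α : ℝ) :
    Differentiable ℂ (arakiInterpolant A B α) := by
  have hpow (C : Matrix ι ι ℂ) : Differentiable ℂ fun ζ : ℂ => supportCpow C (α * ζ) :=
    (differentiable_supportCpow C).comp (differentiable_id.const_mul (α : ℂ))
  have haffine : Differentiable ℂ fun ζ : ℂ => (α - α * ζ : ℂ) := by fun_prop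
  have hpow' : Differentiable ℂ fun ζ : ℂ => supportCpow (A * B * A) (α - α * ζ) :=
    (differentiable_supportCpow (A * B * A)).comp haffine
  exact (traceLinearMap ι ℂ ℂ).toContinuousLinearMap.differentiable.comp
    (hpow'.mul (((hpow A).mul (hpow B)).mul (hpow A)))

variable {α : ℝ}

lemma norm_trace_le (M : Matrix ι ι ℂ) :
    ‖M.trace‖ ≤ ‖(traceLinearMap ι ℂ ℂ).toContinuousLinearMap‖ * ‖M‖ :=
  (traceLinearMap ι ℂ ℂ).toContinuousLinearMap.le_opNorm M

lemma bddAbove_norm_arakiInterpolant (hA : A.PosSemidef) (hB : B.PosSemidef) (hα : 0 ≤ α) :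
    BddAbove ((norm ∘ arakiInterpolant A B α) '' HadamardThreeLines.verticalClosedStrip 0 1) := by
  set K : Matrix ι ι ℂ → ℝ := fun C => max 1 ‖C‖ ^ α
  have hpow {C : Matrix ι ι ℂ} (hC : C.PosSemidef) {z : ℂ} (hz : 0 ≤ z.re) (hzα : z.re ≤ α) :
      ‖supportCpow C z‖ ≤ K C :=
    (norm_supportCpow_le hC hz).trans (Real.rpow_le_rpow_of_exponent_le (le_max_left _ _) hzα)
  refine ⟨‖(traceLinearMap ι ℂ ℂ).toContinuousLinearMap‖ * (K (A * B * A) * (K A * K B * K A)), ?_⟩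
  rintro _ ⟨ζ, ⟨hζ0, hζ1⟩, rfl⟩
  have hre : (α * ζ : ℂ).re = α * ζ.re := re_ofReal_mul α ζ
  have hre' : (α - α * ζ : ℂ).re = α - α * ζ.re := by rw [sub_re, hre, ofReal_re]
  have h0 : 0 ≤ α * ζ.re := mul_nonneg hα hζ0
  have h1 : α * ζ.re ≤ α := mul_le_of_le_one_right hα hζ1
  have hA' := hpow hA (hre ▸ h0) (hre ▸ h1)
  have hB' := hpow hB (hre ▸ h0) (hre ▸ h1)
  have hZ' : ‖supportCpow (A * B * A) (α - α * ζ)‖ ≤ K (A * B * A) :=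
    hpow (posSemidef_mul_mul_self hA hB) (by linarith) (by linarith)
  refine (norm_trace_le _).trans ?_
  gcongr
  refine norm_mul_le_of_le hZ' (norm_mul_le_of_le (norm_mul_le_of_le hA' hB') hA')

lemma norm_arakiInterpolant_le_of_re_eq_zero (hA : A.PosSemidef) (hB : B.PosSemidef)
    {ζ : ℂ} (hζ : ζ.re = 0) :
    ‖arakiInterpolant A B α ζ‖ ≤ (supportCpow (A * B * A) α).trace.re := by
  have hZ := posSemidef_mul_mul_self hA hB
  set Z := A * B * A
  set H := supportCpow Z (α / 2 : ℝ)
  have hHstar : star H = H := by rw [star_supportCpow hZ, conj_ofReal]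
  have hHH : H * H = supportCpow Z α := by rw [← supportCpow_add, ← ofReal_add, add_halves]
  set V := supportCpow A (α * ζ) * supportCpow B (α * ζ) * supportCpow A (α * ζ)
  have hU : ‖V * supportCpow Z (-(α * ζ))‖ ≤ 1 := by
    have h0 : (α * ζ : ℂ).re = 0 := by rw [re_ofReal_mul, hζ, mul_zero]
    have hA' := norm_supportCpow_le_one hA h0
    have hB' := norm_supportCpow_le_one hB h0
    have hZ' := norm_supportCpow_le_one hZ (z := -(α * ζ)) (by rw [neg_re, h0, neg_zero])
    simpa only [mul_one] using
      norm_mul_le_of_le (norm_mul_le_of_le (norm_mul_le_of_le hA' hB') hA') hZ'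
  have hsplit : arakiInterpolant A B α ζ = (H * (V * supportCpow Z (-(α * ζ))) * H).trace := by
    have hexp : (α - α * ζ : ℂ) = -(α * ζ) + ((α / 2 : ℝ) + (α / 2 : ℝ)) := by
      push_cast
      ring
    calc arakiInterpolant A B α ζ = (supportCpow Z (-(α * ζ)) * (H * H) * V).trace := by
          rw [arakiInterpolant, hexp, supportCpow_add, supportCpow_add]
      _ = (V * supportCpow Z (-(α * ζ)) * H * H).trace := by
          rw [trace_mul_comm, ← mul_assoc, ← mul_assoc]
      _ = (H * (V * supportCpow Z (-(α * ζ))) * H).trace := by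
          rw [trace_mul_comm, ← mul_assoc]
  simpa only [hsplit, hHstar, hHH, add_self_div_two] using norm_trace_mul_mul_le hU H H

lemma norm_arakiInterpolant_le_of_re_eq_one (hA : A.PosSemidef) (hB : B.PosSemidef)
    {ζ : ℂ} (hζ : ζ.re = 1) :
    ‖arakiInterpolant A B α ζ‖ ≤ (supportCpow A (2 * α : ℝ) * supportCpow B α).trace.re := by
  have hre : (α * ζ : ℂ).re = α := by rw [re_ofReal_mul, hζ, mul_one]
  set U := supportCpow (A * B * A) (α - α * ζ)
  set Az := supportCpow A (α * ζ)
  set Bz := supportCpow B (α * ζ / 2)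
  have hU : ‖U‖ ≤ 1 :=
    norm_supportCpow_le_one (posSemidef_mul_mul_self hA hB)
      (by rw [sub_re, hre, ofReal_re, sub_self])
  have hBre : 2 * (α * ζ / 2 : ℂ).re = α := by
    rw [show (α * ζ / 2 : ℂ).re = α / 2 by simp [hre], mul_div_cancel₀ α two_ne_zero]
  have hBB : Bz * Bz = supportCpow B (α * ζ) := by rw [← supportCpow_add, add_halves]
  have hleft : (Bz * Az * star (Bz * Az)).trace
      = (supportCpow A (2 * α : ℝ) * supportCpow B α).trace := by
    rw [star_mul, mul_assoc, ← mul_assoc Az, trace_mul_comm, mul_assoc,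
      star_supportCpow_mul_self hB, supportCpow_mul_star_self hA, hre, hBre]
  have hright : (star (Az * Bz) * (Az * Bz)).trace
      = (supportCpow A (2 * α : ℝ) * supportCpow B α).trace := by
    rw [star_mul, mul_assoc, ← mul_assoc (star Az), trace_mul_comm, mul_assoc,
      supportCpow_mul_star_self hB, star_supportCpow_mul_self hA, hre, hBre]
  have hsplit : arakiInterpolant A B α ζ = (Bz * Az * U * (Az * Bz)).trace :=
    calc arakiInterpolant A B α ζ = (U * (Az * (Bz * Bz) * Az)).trace := by
          rw [arakiInterpolant, hBB]
      _ = (U * (Az * Bz) * (Bz * Az)).trace := by simp only [mul_assoc]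
      _ = (Bz * Az * U * (Az * Bz)).trace := by rw [trace_mul_comm, ← mul_assoc]
  simpa only [hsplit, hleft, hright, add_self_div_two] using
    norm_trace_mul_mul_le hU (Bz * Az) (Az * Bz)

lemma arakiInterpolant_one_div (hA : A.PosSemidef) (hB : B.PosSemidef) (hα : α ≠ 0) :
    arakiInterpolant A B α (1 / α : ℝ) = (supportCpow (A * B * A) α).trace := by
  have hone : (α * (1 / α : ℝ) : ℂ) = 1 := by
    rw [← ofReal_mul, mul_one_div_cancel hα, ofReal_one]
  rw [arakiInterpolant, hone, supportCpow_one hA, supportCpow_one hB]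
  conv_lhs => enter [1, 2]; rw [← supportCpow_one (posSemidef_mul_mul_self hA hB)]
  rw [← supportCpow_add, sub_add_cancel]

lemma le_of_le_rpow_one_sub_mul_rpow {x y θ : ℝ} (hx : 0 ≤ x) (hy : 0 ≤ y) (hθ : 0 < θ)
    (h : x ≤ x ^ (1 - θ) * y ^ θ) : x ≤ y := by
  rcases hx.eq_or_lt with rfl | hx0
  · exact hy
  rw [← Real.rpow_le_rpow_iff hx hy hθ]
  refine le_of_mul_le_mul_left ?_ (Real.rpow_pos_of_pos hx0 (1 - θ))
  rwa [← Real.rpow_add hx0, sub_add_cancel, Real.rpow_one]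

lemma trace_cfc_rpow_mul_mul_le (hA : A.PosSemidef) (hB : B.PosSemidef) (hα : 1 < α) :
    (cfc (fun x : ℝ => x ^ α) (A * B * A)).trace.re
      ≤ (cfc (fun x : ℝ => x ^ (2 * α)) A * cfc (fun x : ℝ => x ^ α) B).trace.re := by
  have hα0 : 0 < α := one_pos.trans hα
  rw [← supportCpow_ofReal (posSemidef_mul_mul_self hA hB) hα0,
    ← supportCpow_ofReal hA (by positivity), ← supportCpow_ofReal hB hα0]
  set T := (supportCpow (A * B * A) α).trace.re
  set R := (supportCpow A (2 * α : ℝ) * supportCpow B α).trace.re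
  have hleft (ζ : ℂ) (hζ : ζ.re = 0) := norm_arakiInterpolant_le_of_re_eq_zero (α := α) hA hB hζ
  have hright (ζ : ℂ) (hζ : ζ.re = 1) := norm_arakiInterpolant_le_of_re_eq_one (α := α) hA hB hζ
  have hT : 0 ≤ T := (norm_nonneg _).trans (hleft 0 zero_re)
  have hR : 0 ≤ R := (norm_nonneg _).trans (hright 1 one_re)
  have hmem : ((1 / α : ℝ) : ℂ) ∈ HadamardThreeLines.verticalClosedStrip 0 1 := by
    refine ⟨?_, ?_⟩ <;> rw [ofReal_re]
    · positivity
    · exact (div_le_one hα0).mpr hα.le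
  have hinterp := HadamardThreeLines.norm_le_interp_of_mem_verticalClosedStrip₀₁'
    (arakiInterpolant A B α) hmem (differentiable_arakiInterpolant A B α).diffContOnCl
    (bddAbove_norm_arakiInterpolant hA hB hα0.le) hleft hright
  rw [arakiInterpolant_one_div hA hB hα0.ne', ofReal_re] at hinterp
  exact le_of_le_rpow_one_sub_mul_rpow hT hR (one_div_pos.mpr hα0)
    ((re_le_norm _).trans hinterp)

end ArakiLiebThirring

section Congruence

open scoped MatrixOrder

lemma mul_eq_zero_of_mulVec_imp {l m n o R : Type*} [Fintype n] [Finite o] [Semiring R]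
    {A : Matrix l n R} {B : Matrix m n R} {N : Matrix n o R}
    (hker : ∀ x, A *ᵥ x = 0 → B *ᵥ x = 0) (hN : A * N = 0) : B * N = 0 := by
  classical
  obtain ⟨_⟩ := nonempty_fintype o
  refine ext_of_mulVec_single fun i => ?_
  rw [← mulVec_mulVec, hker _ (by rw [mulVec_mulVec, hN, zero_mulVec]), zero_mulVec]

variable {ι 𝕜 : Type*} [Fintype ι] [DecidableEq ι] [RCLike 𝕜] {ρ σ : Matrix ι ι 𝕜}

/-- The inverse square root `(σ + t)^(-1/2)`, which unlike that of `σ` is a true inverse for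
`0 < t`. -/
def invSqrtAdd (σ : Matrix ι ι 𝕜) (t : ℝ) : Matrix ι ι 𝕜 :=
  cfc (fun s : ℝ => (s + t) ^ (-(1 / 2) : ℝ)) σ

lemma isHermitian_cfc (f : ℝ → ℝ) (σ : Matrix ι ι 𝕜) : (cfc f σ).IsHermitian :=
  cfc_predicate f σ

lemma cfc_mul_cfc (f g : ℝ → ℝ) (σ : Matrix ι ι 𝕜) :
    cfc f σ * cfc g σ = cfc (fun s => f s * g s) σ :=
  (cfc_mul f g σ (σ.finite_real_spectrum.continuousOn f)
    (σ.finite_real_spectrum.continuousOn g)).symm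

lemma nonneg_of_mem_spectrum (hσ : σ.PosSemidef) {s : ℝ} (hs : s ∈ spectrum ℝ σ) : 0 ≤ s :=
  spectrum_nonneg_of_nonneg hσ.nonneg hs

lemma cfc_add_eq_add_smul_one (hσ : σ.IsHermitian) (t : ℝ) :
    cfc (fun s : ℝ => s + t) σ = σ + t • (1 : Matrix ι ι 𝕜) := by
  rw [cfc_add_const t (fun s => s) σ continuousOn_id hσ.isSelfAdjoint,
    cfc_id' ℝ σ hσ.isSelfAdjoint, Algebra.algebraMap_eq_smul_one]

lemma posIndex_sub_smul_sub_smul_one_le (ρ : Matrix ι ι 𝕜) (hσ : σ.PosSemidef) {t : ℝ}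
    (ht : 0 < t) (γ : ℝ) :
    posIndex (ρ - γ • σ - (γ * t) • (1 : Matrix ι ι 𝕜))
      ≤ posIndex (invSqrtAdd σ t * ρ * invSqrtAdd σ t - γ • (1 : Matrix ι ι 𝕜)) := by
  set S := invSqrtAdd σ t
  set C := cfc (fun s : ℝ => (s + t) ^ (1 / 2 : ℝ)) σ
  have hpos {s : ℝ} (hs : s ∈ spectrum ℝ σ) : 0 < s + t :=
    add_pos_of_nonneg_of_pos (nonneg_of_mem_spectrum hσ hs) ht
  have hCC : C * C = σ + t • (1 : Matrix ι ι 𝕜) := by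
    rw [← cfc_add_eq_add_smul_one hσ.isHermitian, cfc_mul_cfc]
    refine cfc_congr fun s hs => ?_
    simp only [← Real.rpow_add (hpos hs), add_halves, Real.rpow_one]
  have hCS : C * S = 1 := by
    simp only [C, S, invSqrtAdd, cfc_mul_cfc]
    rw [← cfc_one ℝ σ hσ.isHermitian.isSelfAdjoint]
    refine cfc_congr fun s hs => ?_
    simp [← Real.rpow_add (hpos hs)]
  have hSC : S * C = 1 := mul_eq_one_comm.mp hCS
  have hconj : ρ - γ • σ - (γ * t) • (1 : Matrix ι ι 𝕜)
      = Cᴴ * (S * ρ * S - γ • (1 : Matrix ι ι 𝕜)) * C := by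
    calc ρ - γ • σ - (γ * t) • (1 : Matrix ι ι 𝕜)
        = C * S * ρ * (S * C) - γ • (C * C) := by
          rw [hCS, hSC, hCC, one_mul, mul_one]
          module
      _ = C * (S * ρ * S - γ • (1 : Matrix ι ι 𝕜)) * C := by
          simp only [mul_sub, sub_mul, mul_assoc, mul_smul_comm, smul_mul_assoc, one_mul]
      _ = Cᴴ * (S * ρ * S - γ • (1 : Matrix ι ι 𝕜)) * C := by rw [(isHermitian_cfc _ σ).eq]
  rw [hconj]
  exact posIndex_conjTranspose_mul_mul_le C _

lemma mul_cfc_congr_of_mulVec_imp (hσ : σ.IsHermitian)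
    (hsupp : ∀ x, σ *ᵥ x = 0 → ρ *ᵥ x = 0) {f g : ℝ → ℝ}
    (hfg : ∀ s ∈ spectrum ℝ σ, s ≠ 0 → f s = g s) : ρ * cfc f σ = ρ * cfc g σ := by
  have hzero : σ * cfc f σ = σ * cfc g σ :=
    calc σ * cfc f σ = cfc (id : ℝ → ℝ) σ * cfc f σ := by rw [cfc_id ℝ σ hσ.isSelfAdjoint]
      _ = cfc (id : ℝ → ℝ) σ * cfc g σ := by
          rw [cfc_mul_cfc, cfc_mul_cfc]
          refine cfc_congr fun s hs => ?_
          rcases eq_or_ne s 0 with rfl | hs0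
          · simp
          · simp [hfg s hs hs0]
      _ = σ * cfc g σ := by rw [cfc_id ℝ σ hσ.isSelfAdjoint]
  rw [← sub_eq_zero, ← mul_sub] at hzero ⊢
  exact mul_eq_zero_of_mulVec_imp hsupp hzero

lemma cfc_mul_mul_cfc_of_mulVec_imp (hρ : ρ.IsHermitian) (hσ : σ.IsHermitian)
    (hsupp : ∀ x, σ *ᵥ x = 0 → ρ *ᵥ x = 0) {f g h : ℝ → ℝ}
    (hfgh : ∀ s ∈ spectrum ℝ σ, s ≠ 0 → f s = g s * h s) :
    cfc f σ * ρ * cfc f σ = cfc g σ * (cfc h σ * ρ * cfc h σ) * cfc g σ := by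
  have hright : ρ * cfc f σ = ρ * (cfc h σ * cfc g σ) := by
    rw [cfc_mul_cfc]
    exact mul_cfc_congr_of_mulVec_imp hσ hsupp fun s hs hs0 => by rw [hfgh s hs hs0, mul_comm]
  have hleft : cfc f σ * ρ = cfc g σ * cfc h σ * ρ := by
    simpa only [conjTranspose_mul, hρ.eq, (isHermitian_cfc _ σ).eq] using
      congrArg conjTranspose hright
  calc cfc f σ * ρ * cfc f σ = cfc g σ * cfc h σ * (ρ * cfc f σ) := by rw [hleft, mul_assoc]
    _ = cfc g σ * (cfc h σ * ρ * cfc h σ) * cfc g σ := by simp only [hright, mul_assoc]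

lemma posSemidef_cfc_mul_mul_cfc (hρ : ρ.PosSemidef) (f : ℝ → ℝ) (σ : Matrix ι ι 𝕜) :
    (cfc f σ * ρ * cfc f σ).PosSemidef := by
  simpa only [(isHermitian_cfc f σ).eq] using hρ.mul_mul_conjTranspose_same (cfc f σ)

lemma invSqrtAdd_mul_mul_invSqrtAdd (hρ : ρ.IsHermitian) (hσ : σ.PosSemidef)
    (hsupp : ∀ x, σ *ᵥ x = 0 → ρ *ᵥ x = 0) (e t : ℝ) :
    invSqrtAdd σ t * ρ * invSqrtAdd σ t
      = cfc (fun s : ℝ => s ^ (-e) * (s + t) ^ (-(1 / 2) : ℝ)) σ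
        * (cfc (fun s : ℝ => s ^ e) σ * ρ * cfc (fun s : ℝ => s ^ e) σ)
        * cfc (fun s : ℝ => s ^ (-e) * (s + t) ^ (-(1 / 2) : ℝ)) σ :=
  cfc_mul_mul_cfc_of_mulVec_imp hρ hσ.isHermitian hsupp fun s hs hs0 => by
    have hspos : 0 < s := (nonneg_of_mem_spectrum hσ hs).lt_of_ne' hs0
    rw [Real.rpow_neg hspos.le]
    field_simp [(Real.rpow_pos_of_pos hspos e).ne']

end Congruence

section SandwichedTrace

open scoped MatrixOrder

variable {ι : Type*} [Fintype ι] [DecidableEq ι] {ρ σ : Matrix ι ι ℂ}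

/-- The operator `σ^((1-α)/(2α)) ρ σ^((1-α)/(2α))` whose `α`-th power has the sandwiched quasi Rényi
divergence as its trace. -/
def sandwichedOperator (ρ σ : Matrix ι ι ℂ) (α : ℝ) : Matrix ι ι ℂ :=
  cfc (fun s : ℝ => s ^ ((1 - α) / (2 * α))) σ * ρ
    * cfc (fun s : ℝ => s ^ ((1 - α) / (2 * α))) σ

lemma posSemidef_sandwichedOperator (hρ : ρ.PosSemidef) (σ : Matrix ι ι ℂ) (α : ℝ) :
    (sandwichedOperator ρ σ α).PosSemidef :=
  posSemidef_cfc_mul_mul_cfc hρ _ σ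

lemma trace_cfc_rpow_invSqrtAdd_mul_mul_le (hρ : ρ.PosSemidef) (hσ : σ.PosSemidef)
    (hsupp : ∀ x, σ *ᵥ x = 0 → ρ *ᵥ x = 0) {α t : ℝ} (hα : 1 < α) (ht : 0 < t) :
    (cfc (fun x : ℝ => x ^ α) (invSqrtAdd σ t * ρ * invSqrtAdd σ t)).trace.re
      ≤ (cfc (fun s : ℝ => s ^ (α - 1) * (s + t) ^ (-α)) σ
          * cfc (fun x : ℝ => x ^ α) (sandwichedOperator ρ σ α)).trace.re := by
  have hα0 : 0 < α := one_pos.trans hα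
  set D := cfc (fun s : ℝ => s ^ (-((1 - α) / (2 * α))) * (s + t) ^ (-(1 / 2) : ℝ)) σ
  have hD : D.PosSemidef := Matrix.nonneg_iff_posSemidef.mp <| cfc_nonneg fun s hs => by
    have := nonneg_of_mem_spectrum hσ hs
    positivity
  have hDpow : cfc (fun x : ℝ => x ^ (2 * α)) D
      = cfc (fun s : ℝ => s ^ (α - 1) * (s + t) ^ (-α)) σ := by
    rw [← cfc_comp' _ _ σ ((σ.finite_real_spectrum.image _).continuousOn _)
      (σ.finite_real_spectrum.continuousOn _)]
    refine cfc_congr fun s hs => ?_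
    have hs0 := nonneg_of_mem_spectrum hσ hs
    rw [Real.mul_rpow (by positivity) (by positivity), ← Real.rpow_mul hs0,
      ← Real.rpow_mul (by positivity)]
    congr 2
    · field_simp [hα0.ne']
      ring
    · ring
  rw [invSqrtAdd_mul_mul_invSqrtAdd hρ.isHermitian hσ hsupp ((1 - α) / (2 * α)), ← hDpow]
  exact trace_cfc_rpow_mul_mul_le hD (posSemidef_sandwichedOperator hρ σ α) hα

end SandwichedTrace

section ShiftIntegral

open Set

lemma lintegral_rpow_mul_add_rpow_neg_le {s p : ℝ} (hs : 0 ≤ s) (hp : 1 < p) :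
    ∫⁻ t in Ioi 0, ENNReal.ofReal (s ^ (p - 1) * (s + t) ^ (-p))
      ≤ ENNReal.ofReal (1 / (p - 1)) := by
  rcases hs.eq_or_lt with rfl | hs
  · simp [Real.zero_rpow (sub_pos.mpr hp).ne']
  refine le_of_eq ?_
  have hpre : (s + ·) ⁻¹' Ioi s = Ioi 0 := by simp
  have hsp : 0 < s ^ (p - 1) := Real.rpow_pos_of_pos hs _
  have hp' : p - 1 ≠ 0 := (sub_pos.mpr hp).ne'
  calc ∫⁻ t in Ioi 0, ENNReal.ofReal (s ^ (p - 1) * (s + t) ^ (-p))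
      = ENNReal.ofReal (s ^ (p - 1)) * ∫⁻ t in Ioi 0, ENNReal.ofReal ((s + t) ^ (-p)) := by
        simp only [ENNReal.ofReal_mul hsp.le, lintegral_const_mul' _ _ ENNReal.ofReal_ne_top]
    _ = ENNReal.ofReal (s ^ (p - 1)) * ∫⁻ u in Ioi s, ENNReal.ofReal (u ^ (-p)) := by
        rw [← hpre, (measurePreserving_add_left volume s).setLIntegral_comp_preimage_emb
          (measurableEmbedding_addLeft s) (fun u => ENNReal.ofReal (u ^ (-p)))]
    _ = ENNReal.ofReal (s ^ (p - 1)) * ENNReal.ofReal (∫ u in Ioi s, u ^ (-p)) := by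
        rw [ofReal_integral_eq_lintegral_ofReal (integrableOn_Ioi_rpow_of_lt (by linarith) hs)]
        exact (ae_restrict_iff' measurableSet_Ioi).mpr
          (.of_forall fun u hu => Real.rpow_nonneg (hs.trans hu).le _)
    _ = ENNReal.ofReal (1 / (p - 1)) := by
        rw [integral_Ioi_rpow_of_lt (by linarith) hs, ← ENNReal.ofReal_mul hsp.le,
          show -p + 1 = -(p - 1) by ring, Real.rpow_neg hs.le]
        field_simp [hp']

variable {ι 𝕜 : Type*} [Fintype ι] [DecidableEq ι] [RCLike 𝕜] {σ Y : Matrix ι ι 𝕜}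

lemma exists_trace_cfc_mul_eq_sum (hσ : σ.IsHermitian) (hY : Y.PosSemidef) :
    ∃ c : ι → ℝ, (∀ i, 0 ≤ c i) ∧
      ∀ f : ℝ → ℝ, RCLike.re (cfc f σ * Y).trace = ∑ i, f (hσ.eigenvalues i) * c i := by
  set U : Matrix ι ι 𝕜 := hσ.eigenvectorUnitary.1
  refine ⟨fun i => RCLike.re ((Uᴴ * Y * U) i i), fun i => ?_, fun f => ?_⟩
  · exact (RCLike.nonneg_iff.mp (hY.conjTranspose_mul_mul_same U).diag_nonneg).1
  · rw [cfc_eq_eigenvectorUnitary_conj hσ, mul_assoc, mul_assoc, trace_mul_comm, mul_assoc,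
      trace, map_sum]
    simp [diagonal_mul, U]

lemma lintegral_trace_cfc_mul_le (hσ : σ.PosSemidef) (hY : Y.PosSemidef) {p : ℝ} (hp : 1 < p) :
    ∫⁻ t in Ioi 0, ENNReal.ofReal
        (RCLike.re (cfc (fun s : ℝ => s ^ (p - 1) * (s + t) ^ (-p)) σ * Y).trace)
      ≤ ENNReal.ofReal (1 / (p - 1)) * ENNReal.ofReal (RCLike.re Y.trace) := by
  obtain ⟨c, hc, htrace⟩ := exists_trace_cfc_mul_eq_sum hσ.isHermitian hY
  set s := hσ.isHermitian.eigenvalues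
  have hs : ∀ i, 0 ≤ s i := hσ.eigenvalues_nonneg
  have hsum : ENNReal.ofReal (RCLike.re Y.trace) = ∑ i, ENNReal.ofReal (c i) := by
    have hone := htrace 1
    rw [cfc_one ℝ σ hσ.isHermitian.isSelfAdjoint, one_mul] at hone
    simp [hone, ENNReal.ofReal_sum_of_nonneg fun i _ => hc i]
  calc ∫⁻ t in Ioi 0, ENNReal.ofReal
          (RCLike.re (cfc (fun s : ℝ => s ^ (p - 1) * (s + t) ^ (-p)) σ * Y).trace)
      = ∫⁻ t in Ioi 0, ∑ i, ENNReal.ofReal (s i ^ (p - 1) * (s i + t) ^ (-p))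
          * ENNReal.ofReal (c i) := by
        refine setLIntegral_congr_fun measurableSet_Ioi fun t (ht : 0 < t) => ?_
        have hnonneg (i) : 0 ≤ s i ^ (p - 1) * (s i + t) ^ (-p) := by
          have := hs i
          positivity
        simp only [htrace, ← ENNReal.ofReal_mul (hnonneg _)]
        exact ENNReal.ofReal_sum_of_nonneg fun i _ => mul_nonneg (hnonneg i) (hc i)
    _ = ∑ i, (∫⁻ t in Ioi 0, ENNReal.ofReal (s i ^ (p - 1) * (s i + t) ^ (-p)))
          * ENNReal.ofReal (c i) := by
        rw [lintegral_finsetSum _ fun i _ => by fun_prop]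
        simp only [lintegral_mul_const' _ _ ENNReal.ofReal_ne_top]
    _ ≤ ∑ i, ENNReal.ofReal (1 / (p - 1)) * ENNReal.ofReal (c i) := by
        gcongr with i
        exact lintegral_rpow_mul_add_rpow_neg_le (hs i) hp
    _ = ENNReal.ofReal (1 / (p - 1)) * ENNReal.ofReal (RCLike.re Y.trace) := by
        rw [hsum, Finset.mul_sum]

end ShiftIntegral

section LayerCake

open Set

open scoped MatrixOrder

variable {n : ℕ} {ρ σ : Matrix (Fin n) (Fin n) ℂ}

lemma mpow_eq_cfc_max_rpow {M : Matrix (Fin n) (Fin n) ℂ} (hM : M.PosSemidef) (p : ℝ) :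
    mpow M p = cfc (fun x : ℝ => max x 0 ^ p) M :=
  cfc_congr fun x hx => by rw [max_eq_left (nonneg_of_mem_spectrum hM hx)]

lemma posSemidef_mpow {M : Matrix (Fin n) (Fin n) ℂ} (hM : M.PosSemidef) (p : ℝ) :
    (mpow M p).PosSemidef :=
  Matrix.nonneg_iff_posSemidef.mp <| cfc_nonneg fun _ hx =>
    Real.rpow_nonneg (nonneg_of_mem_spectrum hM hx) p

lemma rpow_mul_trace_mposPart_eq_lintegral_posIndex (hρ : ρ.IsHermitian) (hσ : σ.IsHermitian)
    (p : ℝ) {γ : ℝ} (hγ : 0 < γ) :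
    ENNReal.ofReal (γ ^ (p - 1) * (mposPart (ρ - γ • σ)).trace.re)
      = ∫⁻ t in Ioi 0, (posIndex (ρ - γ • σ - (γ * t) • (1 : Matrix (Fin n) (Fin n) ℂ)) : ENNReal)
          * ENNReal.ofReal (γ ^ p) := by
  have hherm : (ρ - γ • σ).IsHermitian := hρ.sub (hσ.smul (.all γ))
  set N : ℝ → ENNReal := fun u => posIndex (ρ - γ • σ - u • (1 : Matrix (Fin n) (Fin n) ℂ))
  have hcake := trace_cfc_max_rpow_eq_lintegral_posIndex hherm one_pos
  simp only [Real.rpow_one, sub_self, Real.rpow_zero, ENNReal.ofReal_one, one_mul, mul_one]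
    at hcake
  calc ENNReal.ofReal (γ ^ (p - 1) * (mposPart (ρ - γ • σ)).trace.re)
      = ENNReal.ofReal (γ⁻¹ * γ ^ p) * ENNReal.ofReal (mposPart (ρ - γ • σ)).trace.re := by
        rw [← ENNReal.ofReal_mul (by positivity), Real.rpow_sub_one hγ.ne', div_eq_inv_mul]
    _ = ENNReal.ofReal γ⁻¹ * (∫⁻ u in Ioi 0, N u) * ENNReal.ofReal (γ ^ p) := by
        rw [← hcake, ENNReal.ofReal_mul (by positivity), mul_right_comm]
        rfl
    _ = ∫⁻ t in Ioi 0, N (γ * t) * ENNReal.ofReal (γ ^ p) := by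
        rw [lintegral_mul_const' _ _ ENNReal.ofReal_ne_top, lintegral_Ioi_comp_mul_left N hγ]

lemma measurable_posIndex_sub_smul_sub_smul_one (ρ σ : Matrix (Fin n) (Fin n) ℂ) :
    Measurable fun z : ℝ × ℝ =>
      posIndex (ρ - z.1 • σ - (z.1 * z.2) • (1 : Matrix (Fin n) (Fin n) ℂ)) :=
  (lowerSemicontinuous_posIndex.comp (by fun_prop)).measurable

lemma lintegral_posIndex_mul_rpow_le (hρ : ρ.PosSemidef) (hσ : σ.PosSemidef)
    {α t : ℝ} (hα : 0 < α) (ht : 0 < t) :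
    ENNReal.ofReal α * ∫⁻ γ in Ioi 0,
        (posIndex (ρ - γ • σ - (γ * t) • (1 : Matrix (Fin n) (Fin n) ℂ)) : ENNReal)
          * ENNReal.ofReal (γ ^ (α - 1))
      ≤ ENNReal.ofReal (mpow (invSqrtAdd σ t * ρ * invSqrtAdd σ t) α).trace.re := by
  have hconj : (invSqrtAdd σ t * ρ * invSqrtAdd σ t).PosSemidef :=
    posSemidef_cfc_mul_mul_cfc hρ _ σ
  rw [mpow_eq_cfc_max_rpow hconj]
  refine le_of_le_of_eq ?_ (trace_cfc_max_rpow_eq_lintegral_posIndex hconj.isHermitian hα).symm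
  gcongr with γ
  exact posIndex_sub_smul_sub_smul_one_le ρ hσ ht γ

lemma lintegral_rpow_mul_trace_mposPart_le (hρ : ρ.PosSemidef) (hσ : σ.PosSemidef)
    (hsupp : ∀ x : Fin n → ℂ, σ *ᵥ x = 0 → ρ *ᵥ x = 0) {α : ℝ} (hα : 1 < α) :
    ENNReal.ofReal α * ∫⁻ γ in Ioi 0,
        ENNReal.ofReal (γ ^ (α - 1 - 1) * (mposPart (ρ - γ • σ)).trace.re)
      ≤ ENNReal.ofReal (1 / (α - 1))
        * ENNReal.ofReal (mpow (sandwichedOperator ρ σ α) α).trace.re := by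
  have hα0 : 0 < α := one_pos.trans hα
  set N : ℝ → ℝ → ENNReal := fun γ t =>
    (posIndex (ρ - γ • σ - (γ * t) • (1 : Matrix (Fin n) (Fin n) ℂ)) : ENNReal)
      * ENNReal.ofReal (γ ^ (α - 1))
  have hN : Measurable (Function.uncurry N) := by
    have := measurable_posIndex_sub_smul_sub_smul_one ρ σ
    fun_prop
  calc ENNReal.ofReal α * ∫⁻ γ in Ioi 0,
          ENNReal.ofReal (γ ^ (α - 1 - 1) * (mposPart (ρ - γ • σ)).trace.re)
      = ENNReal.ofReal α * ∫⁻ γ in Ioi 0, ∫⁻ t in Ioi 0, N γ t := by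
        congr 1
        exact setLIntegral_congr_fun measurableSet_Ioi fun γ hγ =>
          rpow_mul_trace_mposPart_eq_lintegral_posIndex hρ.isHermitian hσ.isHermitian _ hγ
    _ = ∫⁻ t in Ioi 0, ENNReal.ofReal α * ∫⁻ γ in Ioi 0, N γ t := by
        rw [lintegral_lintegral_swap hN.aemeasurable,
          lintegral_const_mul' _ _ ENNReal.ofReal_ne_top]
    _ ≤ ∫⁻ t in Ioi 0, ENNReal.ofReal
          (cfc (fun s : ℝ => s ^ (α - 1) * (s + t) ^ (-α)) σ
            * mpow (sandwichedOperator ρ σ α) α).trace.re := by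
        refine setLIntegral_mono' measurableSet_Ioi fun t ht => ?_
        refine (lintegral_posIndex_mul_rpow_le hρ hσ hα0 ht).trans ?_
        exact ENNReal.ofReal_le_ofReal (trace_cfc_rpow_invSqrtAdd_mul_mul_le hρ hσ hsupp hα ht)
    _ ≤ ENNReal.ofReal (1 / (α - 1))
          * ENNReal.ofReal (mpow (sandwichedOperator ρ σ α) α).trace.re :=
        lintegral_trace_cfc_mul_le hσ (posSemidef_mpow (posSemidef_sandwichedOperator hρ σ α) α) hα

lemma re_trace_mul_projPos_nonneg (hσ : σ.PosSemidef) (M : Matrix (Fin n) (Fin n) ℂ) :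
    0 ≤ (σ * projPos M).trace.re :=
  (Complex.le_def.mp (trace_mul_nonneg hσ.nonneg (projPos_nonneg M))).1

lemma lintegral_layerCake_le_sandwiched (hρ : ρ.PosSemidef) (hσ : σ.PosSemidef)
    (hsupp : ∀ x : Fin n → ℂ, σ *ᵥ x = 0 → ρ *ᵥ x = 0) {α : ℝ} (hα : 1 < α) :
    ENNReal.ofReal α * ∫⁻ γ in Ioi 0,
        ENNReal.ofReal (γ ^ (α - 1) * (σ * projPos (ρ - γ • σ)).trace.re)
      ≤ ENNReal.ofReal (mpow (sandwichedOperator ρ σ α) α).trace.re := by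
  have hα1 : 0 < α - 1 := sub_pos.mpr hα
  set φ : ℝ → ℝ := fun γ => (mposPart (ρ - γ • σ)).trace.re
  set t : ℝ → ℝ := fun γ => (σ * projPos (ρ - γ • σ)).trace.re
  set R := ENNReal.ofReal (mpow (sandwichedOperator ρ σ α) α).trace.re
  have hφ (γ) : 0 ≤ φ γ :=
    (Complex.le_def.mp (Matrix.nonneg_iff_posSemidef.mp (mposPart_nonneg _)).trace_nonneg).1
  have ht (γ) : 0 ≤ t γ := re_trace_mul_projPos_nonneg hσ _
  calc ENNReal.ofReal α * ∫⁻ γ in Ioi 0, ENNReal.ofReal (γ ^ (α - 1) * t γ)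
      ≤ ENNReal.ofReal α * (ENNReal.ofReal (α - 1)
          * ∫⁻ γ in Ioi 0, ENNReal.ofReal (γ ^ (α - 1 - 1) * φ γ)) := by
        gcongr
        exact lintegral_rpow_mul_subgradient_le hφ ht
          (trace_mposPart_sub_smul_add_le hρ.isHermitian hσ.isHermitian) hα1
    _ ≤ ENNReal.ofReal (α - 1) * (ENNReal.ofReal (1 / (α - 1)) * R) := by
        rw [mul_left_comm]
        gcongr ENNReal.ofReal (α - 1) * ?_
        exact lintegral_rpow_mul_trace_mposPart_le hρ hσ hsupp hα
    _ = R := by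
        rw [← mul_assoc, ← ENNReal.ofReal_mul hα1.le, mul_one_div_cancel hα1.ne',
          ENNReal.ofReal_one, one_mul]

theorem layerCake_le_sandwiched_general (hρ : ρ.PosSemidef) (hσ : σ.PosSemidef)
    (hsupp : ∀ x : Fin n → ℂ, σ *ᵥ x = 0 → ρ *ᵥ x = 0) {α : ℝ} (hα : 1 < α) :
    IntegrableOn (fun γ => γ ^ (α - 1) * (σ * projPos (ρ - γ • σ)).trace.re) (Ioi 0) ∧
      α * (∫ γ in Ioi 0, γ ^ (α - 1) * (σ * projPos (ρ - γ • σ)).trace.re)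
        ≤ (mpow (mpow σ ((1 - α) / (2 * α)) * ρ * mpow σ ((1 - α) / (2 * α))) α).trace.re := by
  have hα0 : 0 < α := one_pos.trans hα
  have hle := lintegral_layerCake_le_sandwiched hρ hσ hsupp hα
  set R := (mpow (sandwichedOperator ρ σ α) α).trace.re
  have hR : 0 ≤ R := (Complex.le_def.mp
    (posSemidef_mpow (posSemidef_sandwichedOperator hρ σ α) α).trace_nonneg).1
  have hmeas : Measurable fun γ : ℝ => (σ * projPos (ρ - γ • σ)).trace.re :=
    (subgradient_antitone
      (trace_mposPart_sub_smul_add_le hρ.isHermitian hσ.isHermitian)).measurable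
  have hnonneg : 0 ≤ᵐ[volume.restrict (Ioi 0)]
      fun γ : ℝ => γ ^ (α - 1) * (σ * projPos (ρ - γ • σ)).trace.re :=
    (ae_restrict_iff' measurableSet_Ioi).mpr <| .of_forall fun γ hγ =>
      mul_nonneg (Real.rpow_nonneg (mem_Ioi.mp hγ).le _) (re_trace_mul_projPos_nonneg hσ _)
  have hint : IntegrableOn (fun γ => γ ^ (α - 1) * (σ * projPos (ρ - γ • σ)).trace.re)
      (Ioi 0) := by
    refine ⟨by fun_prop, ?_⟩
    rw [hasFiniteIntegral_iff_ofReal hnonneg]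
    refine ENNReal.lt_top_of_mul_ne_top_right (hle.trans_lt ENNReal.ofReal_lt_top).ne ?_
    exact (ENNReal.ofReal_pos.mpr hα0).ne'
  refine ⟨hint, ?_⟩
  rw [← ofReal_integral_eq_lintegral_ofReal hint hnonneg, ← ENNReal.ofReal_mul hα0.le] at hle
  exact (ENNReal.ofReal_le_ofReal_iff hR).mp hle

end LayerCake

/-- for density matrices `ρ ≪ σ` and `α > 1`, the layer-cake quantity
`Q_α(ρ‖σ) = α ∫₀^∞ γ^{α-1} Tr[σ{ρ > γσ}] dγ` is bounded by the sandwiched quasi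
Rényi divergence `Tr[(σ^{(1-α)/(2α)} ρ σ^{(1-α)/(2α)})^α]`. -/
theorem layerCake_le_sandwiched {n : ℕ} (ρ σ : Matrix (Fin n) (Fin n) ℂ)
    (hρ : ρ.PosSemidef) (hσ : σ.PosSemidef) (hρ1 : ρ.trace = 1) (hσ1 : σ.trace = 1)
    (hsupp : ∀ x : Fin n → ℂ, σ *ᵥ x = 0 → ρ *ᵥ x = 0)
    (α : ℝ) (hα : 1 < α) :
    α * (∫ γ in Set.Ioi (0:ℝ),
          γ ^ (α - 1) * (Matrix.trace (σ * projPos (ρ - γ • σ))).re)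
      ≤ (Matrix.trace
          (mpow (mpow σ ((1 - α) / (2 * α)) * ρ * mpow σ ((1 - α) / (2 * α))) α)).re :=
  (layerCake_le_sandwiched_general hρ hσ hsupp hα).2
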